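/- In the two-mode noisy interferometry setting, any symmetric L_y with V L_y V + Ω L_y Ω = ∂_y V satisfies ℱ_{xy} := (1/2)·tr( (∂_x V) · L_y ) + 2·(∂_y d)ᵀ V⁻¹ (∂_x d) = ( 2·(x² + y² + 1)·cosh(2r) + 4 x y ) / ( 2 x y·[ 2 cosh(2r)·(x² + y²) + x y cosh(4r) ] + x⁴ + 4 x² y² + y⁴ − 1 ). -/

import Mathlib

open Matrix

noncomputable section

/-- The standard symplectic form on two modes (4×4). -/
def Omega4 : Matrix (Fin 4) (Fin 4) ℝ :=
  !![0, 1, 0, 0; -1, 0, 0, 0; 0, 0, 0, 1; 0, 0, -1, 0]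

/-- Covariance matrix of the two-mode squeezed input with squeezing parameter `r`. -/
def V0 (r : ℝ) : Matrix (Fin 4) (Fin 4) ℝ :=
  !![Real.cosh (2*r), 0, Real.sinh (2*r), 0;
     0, Real.cosh (2*r), 0, -Real.sinh (2*r);
     Real.sinh (2*r), 0, Real.cosh (2*r), 0;
     0, -Real.sinh (2*r), 0, Real.cosh (2*r)]

/-- Input displacement `√2·(0, a, 0, a)ᵀ` of the optimal probe. -/
def d0 (a : ℝ) : Fin 4 → ℝ := ![0, Real.sqrt 2 * a, 0, Real.sqrt 2 * a]

/-- Phase rotations by `±φ/2` on the two modes. -/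
def Sphase (φ : ℝ) : Matrix (Fin 4) (Fin 4) ℝ :=
  !![Real.cos (φ/2), Real.sin (φ/2), 0, 0;
     -Real.sin (φ/2), Real.cos (φ/2), 0, 0;
     0, 0, Real.cos (φ/2), -Real.sin (φ/2);
     0, 0, Real.sin (φ/2), Real.cos (φ/2)]

/-- Evolved covariance matrix `x·S_φ V₀ S_φᵀ + y·𝟙₄`. -/
def Vm (r φ x y : ℝ) : Matrix (Fin 4) (Fin 4) ℝ :=
  x • (Sphase φ * V0 r * (Sphase φ)ᵀ) + y • (1 : Matrix (Fin 4) (Fin 4) ℝ)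

/-- Evolved displacement `√x·S_φ d₀`. -/
def dm (a φ x : ℝ) : Fin 4 → ℝ := Real.sqrt x • (Sphase φ).mulVec (d0 a)

/-- Entrywise partial derivative of `Vm` with respect to `φ`. -/
def dVdphi (r φ x y : ℝ) : Matrix (Fin 4) (Fin 4) ℝ :=
  Matrix.of fun i j => deriv (fun t => Vm r t x y i j) φ

/-- Entrywise partial derivative of `Vm` with respect to `x`. -/
def dVdx (r φ x y : ℝ) : Matrix (Fin 4) (Fin 4) ℝ :=
  Matrix.of fun i j => deriv (fun t => Vm r φ t y i j) x

/-- Entrywise partial derivative of `Vm` with respect to `y`. -/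
def dVdy (r φ x y : ℝ) : Matrix (Fin 4) (Fin 4) ℝ :=
  Matrix.of fun i j => deriv (fun t => Vm r φ x t i j) y

/-- Entrywise partial derivative of `dm` with respect to `φ`. -/
def ddphi (a φ x : ℝ) : Fin 4 → ℝ := fun i => deriv (fun t => dm a t x i) φ

/-- Entrywise partial derivative of `dm` with respect to `x`. -/
def ddx (a φ x : ℝ) : Fin 4 → ℝ := fun i => deriv (fun t => dm a φ t i) x

/-- Entrywise partial derivative of `dm` with respect to `y` (the displacement does
not depend on `y`). -/
def ddy (a φ x y : ℝ) : Fin 4 → ℝ := fun i => deriv (fun _t : ℝ => dm a φ x i) y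


def Zq : Matrix (Fin 4) (Fin 4) ℝ :=
  !![0, 0, 1, 0; 0, 0, 0, -1; 1, 0, 0, 0; 0, -1, 0, 0]

lemma Zq_sq : Zq * Zq = 1 := by
  ext i j
  fin_cases i <;> fin_cases j <;> simp [Zq, Matrix.mul_apply, Fin.sum_univ_four]

lemma Om_sq : Omega4 * Omega4 = -1 := by
  ext i j
  fin_cases i <;> fin_cases j <;> simp [Omega4, Matrix.mul_apply, Fin.sum_univ_four]

lemma Om_Zq : Omega4 * Zq * Omega4 = Zq := by
  ext i j
  fin_cases i <;> fin_cases j <;> simp [Zq, Omega4, Matrix.mul_apply, Fin.sum_univ_four]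

lemma SVS (r φ : ℝ) : Sphase φ * V0 r * (Sphase φ)ᵀ
    = Real.cosh (2*r) • (1 : Matrix (Fin 4) (Fin 4) ℝ) + Real.sinh (2*r) • Zq := by
  have h := Real.sin_sq_add_cos_sq (φ/2)
  ext i j
  fin_cases i <;> fin_cases j <;>
    simp [Zq, Sphase, V0, Matrix.mul_apply, Fin.sum_univ_four] <;>
    first
      | done
      | ring1
      | linear_combination (Real.cosh (2*r)) * h
      | linear_combination (Real.sinh (2*r)) * h
      | linear_combination (-Real.sinh (2*r)) * h

lemma Vm_eq (r φ x y : ℝ) : Vm r φ x y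
    = (x * Real.cosh (2*r) + y) • (1 : Matrix (Fin 4) (Fin 4) ℝ)
      + (x * Real.sinh (2*r)) • Zq := by
  rw [Vm, SVS]; module

lemma dVdx_eq (r φ x y : ℝ) : dVdx r φ x y
    = Real.cosh (2*r) • (1 : Matrix (Fin 4) (Fin 4) ℝ) + Real.sinh (2*r) • Zq := by
  ext i j
  rw [← SVS r φ]
  simp only [dVdx, Vm, Matrix.of_apply, Matrix.add_apply, Matrix.smul_apply, smul_eq_mul]
  simp

lemma dVdy_eq (r φ x y : ℝ) : dVdy r φ x y = 1 := by
  ext i j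
  simp only [dVdy, Vm, Matrix.of_apply, Matrix.add_apply, Matrix.smul_apply, smul_eq_mul]
  simp

lemma trace_dual (K V W L : Matrix (Fin 4) (Fin 4) ℝ) :
    (K * (V * L * V + W * L * W)).trace = ((V * K * V + W * K * W) * L).trace := by
  have h (U : Matrix (Fin 4) (Fin 4) ℝ) : (K * (U * L * U)).trace = (U * K * U * L).trace := by
    rw [← mul_assoc, Matrix.trace_mul_comm]; simp only [mul_assoc]
  rw [mul_add K, add_mul _ _ L, Matrix.trace_add, Matrix.trace_add, h, h]

lemma key (A B p q : ℝ) (L : Matrix (Fin 4) (Fin 4) ℝ)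
    (hL : (A • (1 : Matrix (Fin 4) (Fin 4) ℝ) + B • Zq) * L * (A • 1 + B • Zq)
      + Omega4 * L * Omega4 = 1) :
    ((((A^2+B^2)*p + 2*A*B*q - p) • (1 : Matrix (Fin 4) (Fin 4) ℝ)
      + (2*A*B*p + (A^2+B^2)*q + q) • Zq) * L).trace = 4 * p := by
  have h1 : ((p • (1 : Matrix (Fin 4) (Fin 4) ℝ) + q • Zq) * 1).trace = 4 * p := by
    simp [Matrix.trace, Fin.sum_univ_four, Zq]; ring
  set V := A • (1 : Matrix (Fin 4) (Fin 4) ℝ) + B • Zq with hV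
  set K := p • (1 : Matrix (Fin 4) (Fin 4) ℝ) + q • Zq with hK
  have h2 := trace_dual K V Omega4 L
  rw [hL, h1] at h2
  rw [h2]
  congr 2
  have h3 : Omega4 * K * Omega4 = (-p) • (1 : Matrix (Fin 4) (Fin 4) ℝ) + q • Zq := by
    simp only [hK, mul_add, add_mul, mul_smul_comm, smul_mul_assoc, mul_one, Om_sq, Om_Zq]
    module
  rw [h3, hV, hK]
  simp only [mul_add, add_mul, mul_smul_comm, smul_mul_assoc, mul_one, one_mul, Zq_sq]
  module

theorem qfi_x_y (r a φ x y : ℝ) (hr : 0 ≤ r) (hx : 0 < x) (hy : |1 - x| < y)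
    (L : Matrix (Fin 4) (Fin 4) ℝ) (hLsymm : L.IsSymm)
    (hL : Vm r φ x y * L * Vm r φ x y + Omega4 * L * Omega4 = dVdy r φ x y) :
    (1/2) * (dVdx r φ x y * L).trace
      + 2 * (ddy a φ x y ⬝ᵥ (Vm r φ x y)⁻¹.mulVec (ddx a φ x)) =
    (2 * (x^2 + y^2 + 1) * Real.cosh (2*r) + 4 * x * y)
      / (2 * x * y * (2 * Real.cosh (2*r) * (x^2 + y^2) + x * y * Real.cosh (4*r))
          + x^4 + 4 * x^2 * y^2 + y^4 - 1) := by
  have hc := Real.one_le_cosh (2*r)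
  have hcs := Real.cosh_sq (2*r)
  have h4 : Real.cosh (4*r) = 2 * Real.cosh (2*r)^2 - 1 := by
    rw [show 4*r = 2*(2*r) by ring, Real.cosh_two_mul]; linarith
  have hdy : ddy a φ x y = 0 := by ext i; simp [ddy]
  rw [Vm_eq, dVdy_eq] at hL
  rw [hdy, zero_dotProduct, dVdx_eq, h4]
  set c := Real.cosh (2*r)
  set s := Real.sinh (2*r)
  have h1 := (abs_lt.mp hy).1
  have h2 := (abs_lt.mp hy).2
  have hy0 : 0 < y := lt_of_le_of_lt (abs_nonneg _) hy
  have hE : 1 < x^2 + y^2 + 2*x*y*c := by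
    nlinarith [mul_pos hx hy0, mul_nonneg (mul_pos hx hy0).le (sub_nonneg.mpr hc)]
  have hD : 2 * x * y * (2 * c * (x^2 + y^2) + x * y * (2 * c^2 - 1))
          + x^4 + 4 * x^2 * y^2 + y^4 - 1 = (x^2 + y^2 + 2*x*y*c)^2 - 1 := by ring
  rw [hD]
  set D := (x^2 + y^2 + 2*x*y*c)^2 - 1 with hDd
  have hD0 : 0 < D := by nlinarith
  set A := x*c+y with hA
  set B := x*s with hB
  have hDAB : (A^2+B^2)^2 - 1 - 4*A^2*B^2 = D := by
    have : A^2 - B^2 = x^2 + y^2 + 2*x*y*c := by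
      rw [hA, hB]; linear_combination x^2 * hcs
    rw [hDd, ← this]; ring
  have k := key A B ((c*(A^2+B^2+1) - 2*A*B*s)/D) ((s*(A^2+B^2-1) - 2*A*B*c)/D) L hL
  have e1 : (A^2+B^2)*((c*(A^2+B^2+1) - 2*A*B*s)/D) + 2*A*B*((s*(A^2+B^2-1) - 2*A*B*c)/D)
      - (c*(A^2+B^2+1) - 2*A*B*s)/D = c := by
    field_simp
    rw [← hDAB]; ring
  have e2 : 2*A*B*((c*(A^2+B^2+1) - 2*A*B*s)/D) + (A^2+B^2)*((s*(A^2+B^2-1) - 2*A*B*c)/D)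
      + (s*(A^2+B^2-1) - 2*A*B*c)/D = s := by
    field_simp
    rw [← hDAB]; ring
  rw [e1, e2] at k
  rw [k]
  have e3 : c*(A^2+B^2+1) - 2*A*B*s = c*(x^2+y^2+1) + 2*x*y := by
    rw [hA, hB]; linear_combination (c*x^2 + 2*x*y) * hcs
  rw [e3]
  field_simp
  ring
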